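/- Let I be the right ideal of R = ℂ[G] consisting of all elements of the form (T − 1)²·r + S·(T − 1)²·r′ with r, r′ ∈ R. Then for each ε ∈ {+1, −1} and every r ∈ R: (S − ε·1)·r ∈ I if and only if there exist a, b ∈ R with r = (S + ε·1)·a + (T − 1)²·b. That is, I_ε = {r ∈ R : (S − ε)·r ∈ I}, where I_ε denotes the right ideal (S + ε)·R + (T − 1)²·R. -/

import Mathlib

open scoped MatrixGroups

/-- `PSL₂(ℤ)`: the quotient of `SL₂(ℤ)` by its center `{±I}`. -/
abbrev PSL2Z : Type :=
  Matrix.SpecialLinearGroup (Fin 2) ℤ ⧸ Subgroup.center (Matrix.SpecialLinearGroup (Fin 2) ℤ)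

/-- The image of `T = [[1,1],[0,1]]` in `PSL₂(ℤ)`. -/
def Tg : PSL2Z := QuotientGroup.mk ModularGroup.T

/-- The image of `S = [[0,-1],[1,0]]` in `PSL₂(ℤ)`. -/
def Sg : PSL2Z := QuotientGroup.mk ModularGroup.S

/-- The element `x = S` of `PSL₂(ℤ)`. -/
def xg : PSL2Z := Sg

/-- The element `y = S·T` of `PSL₂(ℤ)`. -/
def yg : PSL2Z := Sg * Tg

/-- The embedding of the group `PSL₂(ℤ)` into its complex group algebra. -/
noncomputable def ofG : PSL2Z → MonoidAlgebra ℂ PSL2Z := MonoidAlgebra.of ℂ PSL2Z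

/-- `c² + d²` for the bottom row `(c, d)`. -/
def bn (A : Matrix.SpecialLinearGroup (Fin 2) ℤ) : ℤ := A 1 0 ^ 2 + A 1 1 ^ 2

lemma center_cases (A : Matrix.SpecialLinearGroup (Fin 2) ℤ)
    (h : A ∈ Subgroup.center (Matrix.SpecialLinearGroup (Fin 2) ℤ)) :
    A 0 1 = 0 ∧ (A = 1 ∨ A = -1) := by
  rw [Matrix.SpecialLinearGroup.mem_center_iff] at h
  obtain ⟨r, hr, h⟩ := h
  have hr' : r = 1 ∨ r = -1 := by simpa using hr
  constructor
  · rw [← h]; exact Matrix.diagonal_apply_ne (fun _ => r) (i := (0 : Fin 2)) (j := 1) (by decide)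
  · rcases hr' with rfl | rfl
    · left; ext i j; rw [← h]; simp
    · right; ext i j; rw [← h]; fin_cases i <;> fin_cases j <;> simp

/-- The bottom row norm on `PSL2Z`. -/
def bnq : PSL2Z → ℤ := Quotient.lift bn (by
  intro A B hAB
  have h := QuotientGroup.leftRel_apply.mp hAB
  have h2 := (center_cases _ h).2
  have : B = A ∨ B = -A := by
    rcases h2 with h2 | h2
    · left; exact (inv_mul_eq_one.mp h2).symm
    · right; rw [inv_mul_eq_iff_eq_mul] at h2; rw [h2]; simp
  rcases this with rfl | rfl <;> simp [bn])

lemma bnq_mk (A : Matrix.SpecialLinearGroup (Fin 2) ℤ) :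
    bnq (QuotientGroup.mk A) = A 1 0 ^ 2 + A 1 1 ^ 2 := rfl

lemma T_inj (g : PSL2Z) : Function.Injective (fun n : ℤ => Tg ^ n * g) := by
  intro n m h
  have h1 : Tg ^ n = Tg ^ m := mul_right_cancel h
  have h2 : (QuotientGroup.mk (ModularGroup.T ^ n) : PSL2Z) = QuotientGroup.mk (ModularGroup.T ^ m) := h1
  rw [QuotientGroup.eq, ← zpow_neg, ← zpow_add] at h2
  have h3 := (center_cases _ h2).1
  rw [ModularGroup.coe_T_zpow] at h3
  simp at h3
  omega

lemma Sg_sq : Sg * Sg = 1 := by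
  have : (QuotientGroup.mk (ModularGroup.S * ModularGroup.S) : PSL2Z) = 1 := by
    rw [QuotientGroup.eq_one_iff, Matrix.SpecialLinearGroup.mem_center_iff]
    refine ⟨-1, by simp, ?_⟩
    rw [Matrix.SpecialLinearGroup.coe_mul, ModularGroup.coe_S]
    ext i j
    fin_cases i <;> fin_cases j <;> simp
  exact this

/-- Two far apart elements of a `T`-orbit cannot both be of small height. -/
lemma geom (g : PSL2Z) (n m : ℤ) (hnm : n + 2 ≤ m)
    (hn : bnq (Sg * (Tg ^ n * g)) ≤ bnq g) (hm : bnq (Sg * (Tg ^ m * g)) ≤ bnq g) : False := by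
  obtain ⟨A, rfl⟩ := QuotientGroup.mk_surjective g
  have key : ∀ k : ℤ, bnq (Sg * (Tg ^ k * QuotientGroup.mk A)) =
      (A 0 0 + k * A 1 0) ^ 2 + (A 0 1 + k * A 1 1) ^ 2 := by
    intro k
    change bnq (QuotientGroup.mk (ModularGroup.S * (ModularGroup.T ^ k * A))) = _
    rw [bnq_mk]
    simp only [Matrix.SpecialLinearGroup.coe_mul, ModularGroup.coe_T_zpow, ModularGroup.coe_S]
    simp [Matrix.mul_apply, Fin.sum_univ_two, Matrix.vecMul, dotProduct]
  rw [key, bnq_mk] at hn hm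
  have hd := A.det_coe
  rw [Matrix.det_fin_two] at hd
  change A 0 0 * A 1 1 - A 0 1 * A 1 0 = 1 at hd
  generalize A 0 0 = a at *
  generalize A 0 1 = b at *
  generalize A 1 0 = c at *
  generalize A 1 1 = d at *
  obtain ⟨k, rfl⟩ : ∃ k, m = n + k := ⟨m - n, by ring⟩
  have hk : 2 ≤ k := by omega
  have hq : 0 ≤ c ^ 2 + d ^ 2 := by positivity
  have hk2 : 4 * (c ^ 2 + d ^ 2) ≤ k ^ 2 * (c ^ 2 + d ^ 2) := by
    apply mul_le_mul_of_nonneg_right _ hq; nlinarith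
  have hs : (2 * a + (2 * n + k) * c) ^ 2 + (2 * b + (2 * n + k) * d) ^ 2 ≤ 0 := by
    nlinarith
  have h1 : 2 * a + (2 * n + k) * c = 0 := by
    have := sq_nonneg (2 * b + (2 * n + k) * d)
    exact pow_eq_zero_iff (two_ne_zero) |>.mp (le_antisymm (by linarith) (sq_nonneg _))
  have h2 : 2 * b + (2 * n + k) * d = 0 := by
    have := sq_nonneg (2 * a + (2 * n + k) * c)
    exact pow_eq_zero_iff (two_ne_zero) |>.mp (le_antisymm (by linarith) (sq_nonneg _))
  have : 2 * (a * d - b * c) = 0 := by linear_combination d * h1 - c * h2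
  omega

lemma const_above (h : ℤ → ℂ) (hf : (Function.support h).Finite) (m : ℤ)
    (hc : ∀ n, m < n → h n = h (n - 1)) : h m = 0 := by
  obtain ⟨B, hB⟩ := hf.bddAbove
  have h1 : ∀ n, m ≤ n → h n = h m := by
    intro n hn
    induction n, hn using Int.leInduction with
    | base => rfl
    | succ n hn ih => rw [hc (n + 1) (by omega)]; simpa using ih
  rw [← h1 (max m (B + 1)) (le_max_left _ _)]
  by_contra hne
  have : max m (B + 1) ≤ B := hB hne
  have := le_max_right m (B + 1)
  omega

lemma const_below (h : ℤ → ℂ) (hf : (Function.support h).Finite) (m : ℤ)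
    (hc : ∀ n, n < m → h n = h (n - 1)) : h (m - 1) = 0 := by
  have hf2 : (Function.support (fun n => h (-n))).Finite := by
    have : Function.support (fun n => h (-n)) = (fun n : ℤ => -n) ⁻¹' Function.support h := rfl
    rw [this]
    exact hf.preimage neg_injective.injOn
  have := const_above (fun n => h (-n)) hf2 (1 - m) (by
    intro n hn
    have := hc (-n + 1) (by omega)
    simp only [add_sub_cancel_right] at this
    rw [← this]; congr 1; ring)
  simpa using this

lemma second_diff (h f : ℤ → ℂ) (hf : (Function.support h).Finite)
    (hfh : ∀ n, f n = h n - 2 * h (n - 1) + h (n - 1 - 1)) (m : ℤ)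
    (hs : ∀ n, f n ≠ 0 → n = m ∨ n = m + 1) : ∀ n, f n = 0 := by
  have hz : ∀ n, n ≠ m → n ≠ m + 1 → f n = 0 := by
    intro n h1 h2
    by_contra h3
    rcases hs n h3 with h | h <;> contradiction
  set d : ℤ → ℂ := fun n => h n - h (n - 1) with hd
  have hfd : ∀ n, f n = d n - d (n - 1) := by intro n; rw [hfh]; simp only [hd]; ring
  have hfin : (Function.support d).Finite := by
    refine (hf.union (hf.preimage (f := fun n : ℤ => n - 1) (sub_left_injective.injOn))).subset ?_
    intro n hn
    by_contra h3
    simp only [Set.mem_union, Function.mem_support, Set.mem_preimage, not_or, not_not] at h3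
    apply hn
    simp [hd, h3.1, h3.2]
  have d1 : ∀ n, m + 1 ≤ n → d n = 0 := by
    intro n hn
    apply const_above d hfin
    intro k hk
    have := hfd k
    rw [hz k (by omega) (by omega)] at this
    exact (sub_eq_zero.mp this.symm)
  have d2 : ∀ n, n < m → d n = 0 := by
    intro n hn
    have := const_below d hfin (n + 1) (by
      intro k hk
      have := hfd k
      rw [hz k (by omega) (by omega)] at this
      exact (sub_eq_zero.mp this.symm))
    simpa using this
  have h1 : h m = 0 := const_above h hf m (fun n hn => sub_eq_zero.mp (d1 n (by omega)))
  have h2 : h (m - 1) = 0 := const_below h hf m (fun n hn => sub_eq_zero.mp (d2 n hn))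
  have dm : d m = 0 := by simp [hd, h1, h2]
  have dall : ∀ n, d n = 0 := by
    intro n
    rcases lt_trichotomy n m with h | h | h
    · exact d2 n h
    · rw [h]; exact dm
    · exact d1 n (by omega)
  intro n
  rw [hfd, dall, dall, sub_zero]

lemma ofG_mul_apply (g k : PSL2Z) (w : MonoidAlgebra ℂ PSL2Z) :
    (ofG g * w).coeff k = w.coeff (g⁻¹ * k) := by
  simp [ofG, MonoidAlgebra.of_apply]

lemma key_lemma (δ : ℂ) (hδ : δ ≠ 0) (w : MonoidAlgebra ℂ PSL2Z)
    (hS : ofG Sg * ((ofG Tg - 1) ^ 2 * w) = δ • ((ofG Tg - 1) ^ 2 * w)) :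
    (ofG Tg - 1) ^ 2 * w = 0 := by
  have hv : ∀ k, ((ofG Tg - 1) ^ 2 * w).coeff k =
      w.coeff k - 2 * w.coeff (Tg⁻¹ * k) + w.coeff (Tg⁻¹ * (Tg⁻¹ * k)) := by
    intro k
    have : (ofG Tg - 1) ^ 2 * w = w - (ofG Tg * w + ofG Tg * w) + ofG Tg * (ofG Tg * w) := by
      noncomm_ring
    rw [this]
    change w.coeff k - ((ofG Tg * w).coeff k + (ofG Tg * w).coeff k) + (ofG Tg * (ofG Tg * w)).coeff k = _
    simp only [ofG_mul_apply]
    ring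
  generalize (ofG Tg - 1) ^ 2 * w = v at *
  have hSv : ∀ k, v.coeff k ≠ 0 → v.coeff (Sg * k) ≠ 0 := by
    intro k hk
    have h1 : (ofG Sg * v).coeff k = δ * v.coeff k := by rw [hS]; rfl
    rw [ofG_mul_apply, inv_eq_of_mul_eq_one_left Sg_sq] at h1
    rw [h1]; exact mul_ne_zero hδ hk
  by_contra hne
  have hnon : v.coeff.support.Nonempty := Finsupp.support_nonempty_iff.mpr (by simpa using hne)
  obtain ⟨g, hg, hmax⟩ := v.coeff.support.exists_max_image bnq hnon
  have hle : ∀ n : ℤ, v.coeff (Tg ^ n * g) ≠ 0 → bnq (Sg * (Tg ^ n * g)) ≤ bnq g := fun n hn =>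
    hmax _ (Finsupp.mem_support_iff.mpr (hSv _ hn))
  have hg0 : v.coeff g ≠ 0 := Finsupp.mem_support_iff.mp hg
  have hg0' : v.coeff (Tg ^ (0 : ℤ) * g) ≠ 0 := by simpa using hg0
  have hfar : ∀ n m : ℤ, v.coeff (Tg ^ n * g) ≠ 0 → v.coeff (Tg ^ m * g) ≠ 0 → m < n + 2 := by
    intro n m hn hm
    by_contra hlt
    exact geom g n m (by omega) (hle n hn) (hle m hm)
  have hfin : (Function.support (fun n : ℤ => w.coeff (Tg ^ n * g))).Finite := by
    have : (((w.coeff.support : Set PSL2Z)).Finite) := w.coeff.support.finite_toSet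
    refine (this.preimage (T_inj g).injOn).subset ?_
    intro n hn
    simpa using hn
  have hfh : ∀ n : ℤ, v.coeff (Tg ^ n * g) = w.coeff (Tg ^ n * g) - 2 * w.coeff (Tg ^ (n - 1) * g)
      + w.coeff (Tg ^ (n - 1 - 1) * g) := by
    intro n
    have e : ∀ n : ℤ, Tg ^ (n - 1) * g = Tg⁻¹ * (Tg ^ n * g) := by
      intro n
      rw [← mul_assoc, sub_eq_neg_add, zpow_add, zpow_neg_one]
    rw [hv, e (n - 1), e n]
  have hex : ∃ m : ℤ, ∀ n : ℤ, v.coeff (Tg ^ n * g) ≠ 0 → n = m ∨ n = m + 1 := by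
    by_cases h1 : v.coeff (Tg ^ (-1 : ℤ) * g) ≠ 0
    · refine ⟨-1, fun n hn => ?_⟩
      have := hfar _ _ h1 hn
      have := hfar _ _ hn hg0'
      omega
    · refine ⟨0, fun n hn => ?_⟩
      have := hfar _ _ hg0' hn
      have := hfar _ _ hn hg0'
      have : n ≠ -1 := by rintro rfl; exact h1 hn
      omega
  obtain ⟨m, hm⟩ := hex
  exact hg0' (second_diff (fun n => w.coeff (Tg ^ n * g)) (fun n => v.coeff (Tg ^ n * g)) hfin hfh m hm 0)

/-- With `𝓘 = (T-1)²R + S(T-1)²R` and `𝓘_ε = (S+ε)R + (T-1)²R` for `ε = ±1`: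
`𝓘_ε = {r ∈ R : (S - ε)·r ∈ 𝓘}` in `R = ℂ[PSL₂(ℤ)]`. -/
theorem ideal_eps_characterization (ε : ℂ) (hε : ε = 1 ∨ ε = -1)
    (r : MonoidAlgebra ℂ PSL2Z) :
    (∃ u u' : MonoidAlgebra ℂ PSL2Z,
      (ofG Sg - ε • 1) * r = (ofG Tg - 1) ^ 2 * u + ofG Sg * (ofG Tg - 1) ^ 2 * u') ↔
    (∃ a b : MonoidAlgebra ℂ PSL2Z,
      r = (ofG Sg + ε • 1) * a + (ofG Tg - 1) ^ 2 * b) := by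
  have hee : ε * ε = 1 := by rcases hε with rfl | rfl <;> norm_num
  have hne : ε ≠ 0 := by rintro rfl; simp at hee
  have hSS : ofG Sg * ofG Sg = 1 := by
    have : ofG (Sg * Sg) = ofG Sg * ofG Sg := map_mul (MonoidAlgebra.of ℂ PSL2Z) Sg Sg
    rw [← this, Sg_sq]; exact map_one (MonoidAlgebra.of ℂ PSL2Z)
  have hSSx : ∀ x, ofG Sg * (ofG Sg * x) = x := by intro x; rw [← mul_assoc, hSS, one_mul]
  have hkey := key_lemma (-ε) (neg_ne_zero.mpr hne)
  generalize (ofG Tg - 1) ^ 2 = P at *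
  generalize ofG Sg = s at *
  constructor
  · rintro ⟨u, u', h⟩
    have h1 : s * (s * r - ε • r) = -(ε • (s * r - ε • r)) := by
      rw [mul_sub, hSSx, mul_smul_comm, smul_sub, smul_smul, hee, one_smul, neg_sub]
    have h' : s * r - ε • r = P * u + s * (P * u') := by
      rw [← mul_assoc, ← h, sub_mul, smul_mul_assoc, one_mul]
    rw [h', mul_add, hSSx, smul_add] at h1
    have h2 := hkey (u + ε • u') (by
      simp only [mul_add, mul_smul_comm, smul_add, smul_smul, neg_smul, neg_mul, hee, one_smul]
      have h3 : s * (P * u) = -(ε • (P * u) + ε • (s * (P * u'))) - P * u' := eq_sub_of_add_eq h1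
      rw [h3]; abel)
    rw [mul_add, mul_smul_comm] at h2
    have h4 : P * u = -(ε • (P * u')) := eq_neg_of_add_eq_zero_left h2
    rw [h4] at h'
    have h5 : s * (r - P * u') = ε • (r - P * u') := by
      rw [mul_sub, smul_sub]
      have : s * r = -(ε • (P * u')) + s * (P * u') + ε • r := eq_add_of_sub_eq h'
      rw [this]; abel
    refine ⟨(ε / 2) • (r - P * u'), u', ?_⟩
    rw [add_mul, mul_smul_comm, h5, smul_mul_assoc, one_mul, smul_smul, smul_smul, ← add_smul]
    have : ε / 2 * ε + ε * (ε / 2) = 1 := by linear_combination hee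
    rw [this, one_smul]; abel
  · rintro ⟨a, b, rfl⟩
    refine ⟨-(ε • b), b, ?_⟩
    simp only [sub_mul, add_mul, mul_add, smul_mul_assoc, one_mul, hSSx, mul_smul_comm,
      smul_sub, smul_smul, hee, one_smul, mul_neg, mul_assoc]
    abel
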